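/- arXiv:2201.09719 — 2 statements merged into one kernel-verified Lean document; each statement's English description precedes it below -/
import Mathlib

section
/- Let Θ be a real symplectic 2n×2n matrix acting ℂ-linearly on ℂ^{2n}, k ≥ 1 and ω a primitive k-th root of unity. With Γ = {(ξ1,…,ξk, Θξ1,…,Θξk)}, Π^{2k} = Π × ⋯ × Π (2k factors) and Δ^↺ = {(ξ1,…,ξk, ξ2, ξ3,…,ξk, ξ1)} inside Σ^k × Σ^k, Σ = ℂ^{2n}, one has dim_ℂ(Γ ∩ Π^{2k} ∩ Δ^↺) = Σ_{j=0}^{k−1} dim_ℂ(ker(Θ − ωʲ) ∩ Π). -/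
open scoped ComplexOrder

noncomputable section

/-- `ℂ^{2n}`, written with coordinates indexed by `Fin n ⊕ Fin n`
(first block = `q`-coordinates, second block = `p`-coordinates). -/
abbrev CV (n : ℕ) := (Fin n ⊕ Fin n) → ℂ

/-- The sesquilinear extension `σ_ℂ(X,Y) = σ(X̄,Y)` of the standard symplectic form
`σ(x,y) = ⟨Jx,y⟩`, `J = [[0,−I],[I,0]]`, to `ℂ^{2n}` (conjugate-linear in the first
argument). -/
def sigmaC (n : ℕ) : CV n →ₛₗ[starRingEnd ℂ] CV n →ₗ[ℂ] ℂ :=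
  LinearMap.mk₂'ₛₗ (starRingEnd ℂ) (RingHom.id ℂ)
    (fun x y => (∑ i : Fin n, (starRingEnd ℂ) (x (Sum.inl i)) * y (Sum.inr i)) -
      ∑ i : Fin n, (starRingEnd ℂ) (x (Sum.inr i)) * y (Sum.inl i))
    (by intro x x' y; simp [add_mul, Finset.sum_add_distrib]; ring)
    (by
      intro c x y
      simp only [Pi.smul_apply, smul_eq_mul, map_mul]
      rw [mul_sub, Finset.mul_sum, Finset.mul_sum]
      congr 1 <;> exact Finset.sum_congr rfl (by intros; ring))
    (by intro x y y'; simp [mul_add, Finset.sum_add_distrib]; ring)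
    (by
      intro c x y
      simp only [Pi.smul_apply, smul_eq_mul, RingHom.id_apply]
      rw [mul_sub, Finset.mul_sum, Finset.mul_sum]
      congr 1 <;> exact Finset.sum_congr rfl (by intros; ring))

/-- The orthogonal of a subspace with respect to a sesquilinear form. -/
def sesqOrth {W : Type*} [AddCommGroup W] [Module ℂ W]
    (f : W →ₛₗ[starRingEnd ℂ] W →ₗ[ℂ] ℂ) (L : Submodule ℂ W) : Submodule ℂ W where
  carrier := {u | ∀ w ∈ L, f u w = 0}
  add_mem' := by
    intro a b ha hb w hw
    simp [map_add, ha w hw, hb w hw]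
  zero_mem' := by
    intro w hw
    simp
  smul_mem' := by
    intro c u hu w hw
    simp [LinearMap.map_smulₛₗ, hu w hw]

/-- A complex subspace is Lagrangian for a sesquilinear form when it coincides with its
orthogonal. -/
def IsLagrangianC {W : Type*} [AddCommGroup W] [Module ℂ W]
    (f : W →ₛₗ[starRingEnd ℂ] W →ₗ[ℂ] ℂ) (L : Submodule ℂ W) : Prop :=
  L = sesqOrth f L

/-- Negative inertia index of the (Hermitian) Maslov form of a triple of complex
Lagrangian subspaces: the supremum of complex dimensions of subspaces of
`L1 ∩ (L0 + L2)` on which `m(l1) = σ_ℂ(l0,l2)` is negative definite (negativity in the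
complex order: real and `< 0`). -/
def maslovIndexC {W : Type*} [AddCommGroup W] [Module ℂ W]
    (f : W →ₛₗ[starRingEnd ℂ] W →ₗ[ℂ] ℂ) (L0 L1 L2 : Submodule ℂ W) : ℕ :=
  sSup {d : ℕ | ∃ S : Submodule ℂ W, S ≤ L1 ⊓ (L0 ⊔ L2) ∧
    (∀ v ∈ S, v ≠ 0 → ∀ l0 ∈ L0, ∀ l2 ∈ L2, v = l0 + l2 → f l0 l2 < 0) ∧
    Module.finrank ℂ ↥S = d}

/-- The direct sum of two sesquilinear forms on a product space. -/
def sesqProd {W1 W2 : Type*} [AddCommGroup W1] [Module ℂ W1] [AddCommGroup W2] [Module ℂ W2]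
    (f : W1 →ₛₗ[starRingEnd ℂ] W1 →ₗ[ℂ] ℂ) (g : W2 →ₛₗ[starRingEnd ℂ] W2 →ₗ[ℂ] ℂ) :
    (W1 × W2) →ₛₗ[starRingEnd ℂ] (W1 × W2) →ₗ[ℂ] ℂ :=
  LinearMap.mk₂'ₛₗ (starRingEnd ℂ) (RingHom.id ℂ)
    (fun x y => f x.1 y.1 + g x.2 y.2)
    (by intro x x' y; simp [map_add]; ring)
    (by intro c x y; simp [LinearMap.map_smulₛₗ, smul_eq_mul, mul_add])
    (by intro x y y'; simp [map_add]; ring)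
    (by intro c x y; simp [smul_eq_mul, mul_add])

/-- The direct sum of `k` copies of a sesquilinear form. -/
def sesqPi {W : Type*} [AddCommGroup W] [Module ℂ W] (k : ℕ)
    (f : W →ₛₗ[starRingEnd ℂ] W →ₗ[ℂ] ℂ) :
    (Fin k → W) →ₛₗ[starRingEnd ℂ] (Fin k → W) →ₗ[ℂ] ℂ :=
  LinearMap.mk₂'ₛₗ (starRingEnd ℂ) (RingHom.id ℂ)
    (fun x y => ∑ i, f (x i) (y i))
    (by intro x x' y; simp [map_add, Finset.sum_add_distrib])
    (by intro c x y; simp [LinearMap.map_smulₛₗ, Finset.mul_sum])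
    (by intro x y y'; simp [map_add, Finset.sum_add_distrib])
    (by intro c x y; simp [Finset.mul_sum])

/-- The vertical Lagrangian subspace `Π = {(p,0)} ⊂ ℂ^{2n}`. -/
def PiV (n : ℕ) : Submodule ℂ (CV n) where
  carrier := {x | ∀ i, x (Sum.inr i) = 0}
  add_mem' := by intro a b ha hb i; simp [ha i, hb i]
  zero_mem' := by intro i; simp
  smul_mem' := by intro c x hx i; simp [hx i]

/-- The standard symplectic matrix `J = [[0,−I],[I,0]]`. -/
def symplJ (n : ℕ) : Matrix (Fin n ⊕ Fin n) (Fin n ⊕ Fin n) ℝ :=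
  Matrix.fromBlocks 0 (-1) 1 0

/-- The `ℂ`-linear action on `ℂ^{2n}` of a real `2n×2n` matrix. -/
def cAction {n : ℕ} (Θ : Matrix (Fin n ⊕ Fin n) (Fin n ⊕ Fin n) ℝ) : CV n →ₗ[ℂ] CV n :=
  (Θ.map (Complex.ofReal)).mulVecLin


/-- The form `(−σ_ℂ) ⊕ σ_ℂ` on `ℂ^{2n} × ℂ^{2n}`. -/
def sigma2C (n : ℕ) :
    (CV n × CV n) →ₛₗ[starRingEnd ℂ] (CV n × CV n) →ₗ[ℂ] ℂ :=
  sesqProd (-(sigmaC n)) (sigmaC n)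

/-- The form `(−σ_ℂ)^{⊕k} ⊕ σ_ℂ^{⊕k}` on `Σ^k × Σ^k`, `Σ = ℂ^{2n}`. -/
def bigSigmaC (n k : ℕ) :
    ((Fin k → CV n) × (Fin k → CV n)) →ₛₗ[starRingEnd ℂ]
      ((Fin k → CV n) × (Fin k → CV n)) →ₗ[ℂ] ℂ :=
  sesqProd (-(sesqPi k (sigmaC n))) (sesqPi k (sigmaC n))

/-- The Lagrangian subspace `Π² = Π × Π` of `ℂ^{2n} × ℂ^{2n}`. -/
def Pi2Sub (n : ℕ) : Submodule ℂ (CV n × CV n) := (PiV n).prod (PiV n)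

/-- The diagonal Lagrangian subspace `Δ = {(ξ,ξ)}` of `ℂ^{2n} × ℂ^{2n}`. -/
def DiaSub (n : ℕ) : Submodule ℂ (CV n × CV n) :=
  LinearMap.graph (LinearMap.id : CV n →ₗ[ℂ] CV n)

/-- The Lagrangian subspace `Π^{2k} = Π × ⋯ × Π` of `Σ^k × Σ^k`. -/
def Pi2kSub (n k : ℕ) : Submodule ℂ ((Fin k → CV n) × (Fin k → CV n)) :=
  (Submodule.pi Set.univ fun _ : Fin k => PiV n).prod
    (Submodule.pi Set.univ fun _ : Fin k => PiV n)

/-- The graph `Γ = {(ξ1,…,ξk,Θξ1,…,Θξk)}` of the diagonal action of `Θ` on `Σ^k`. -/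
def GamSub (n k : ℕ) (Θ : Matrix (Fin n ⊕ Fin n) (Fin n ⊕ Fin n) ℝ) :
    Submodule ℂ ((Fin k → CV n) × (Fin k → CV n)) :=
  LinearMap.graph (LinearMap.pi fun i : Fin k => (cAction Θ).comp (LinearMap.proj i))

/-- The graph `Δ^↺ = {(ξ1,…,ξk,ξ2,…,ξk,ξ1)}` of the cyclic shift on `Σ^k`. -/
def DcycSub (n k : ℕ) [NeZero k] : Submodule ℂ ((Fin k → CV n) × (Fin k → CV n)) :=
  LinearMap.graph (LinearMap.funLeft ℂ (CV n) (fun i : Fin k => i + 1))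

theorem aux_pow_shift (k : ℕ) [NeZero k] (z : ℂ) (hz : z ^ k = 1) (i : Fin k) (j : ℕ) :
    z ^ ((i + 1 : Fin k).val * j) = z ^ j * z ^ (i.val * j) := by
  have h1 : ((i + 1 : Fin k).val) = (i.val + 1) % k := by
    rw [Fin.val_add, Fin.val_one', Nat.add_mod_mod]
  rw [h1, pow_mul, ← pow_eq_pow_mod _ hz, ← pow_mul, ← pow_add]
  congr 1; ring

theorem aux_orth (k : ℕ) [NeZero k] (ω : ℂ) (hω : IsPrimitiveRoot ω k) (a b : Fin k) :
    ∑ i : Fin k, (ω⁻¹) ^ (i.val * a.val) * ω ^ (i.val * b.val) = if a = b then (k : ℂ) else 0 := by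
  have hk : k ≠ 0 := NeZero.ne k
  have h0 : ω ≠ 0 := hω.ne_zero hk
  have e : ∀ i : Fin k, (ω⁻¹) ^ (i.val * a.val) * ω ^ (i.val * b.val)
      = (ω⁻¹ ^ a.val * ω ^ b.val) ^ i.val := by
    intro i
    rw [mul_pow, ← pow_mul, ← pow_mul, mul_comm a.val, mul_comm b.val]
  rw [Finset.sum_congr rfl (fun i _ => e i)]
  rw [Fin.sum_univ_eq_sum_range (fun i => (ω⁻¹ ^ a.val * ω ^ b.val) ^ i) k]
  split_ifs with h
  · subst h
    simp [← mul_pow, h0]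
  · have hne : ω⁻¹ ^ a.val * ω ^ b.val ≠ 1 := by
      intro hh
      apply h
      have : ω ^ a.val = ω ^ b.val := by
        rw [inv_pow] at hh
        field_simp at hh
        exact hh.symm
      exact Fin.ext (hω.pow_inj a.2 b.2 this)
    have := mul_neg_geom_sum (ω⁻¹ ^ a.val * ω ^ b.val) k
    have h1 : (ω⁻¹ ^ a.val * ω ^ b.val) ^ k = 1 := by
      rw [mul_pow, ← pow_mul, ← pow_mul, mul_comm a.val, mul_comm b.val, pow_mul, pow_mul,
        inv_pow, hω.pow_eq_one]
      simp
    rw [h1, sub_self] at this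
    rcases mul_eq_zero.1 this with h2 | h2
    · exact absurd (sub_eq_zero.1 h2).symm hne
    · exact h2

theorem aux_orth' (k : ℕ) [NeZero k] (ω : ℂ) (hω : IsPrimitiveRoot ω k) (a b : Fin k) :
    ∑ i : Fin k, ω ^ (a.val * i.val) * (ω⁻¹) ^ (b.val * i.val) = if a = b then (k : ℂ) else 0 := by
  have h := aux_orth k ω hω b a
  simp only [eq_comm (a := b)] at h
  rw [← h]
  refine Finset.sum_congr rfl fun i _ => ?_
  rw [mul_comm a.val, mul_comm b.val, mul_comm]

/-- discrete Fourier synthesis -/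
def auxA {V : Type*} [AddCommGroup V] [Module ℂ V] (k : ℕ) (ω : ℂ)
    (E : Fin k → Submodule ℂ V) : (∀ j, E j) →ₗ[ℂ] (Fin k → V) :=
  LinearMap.pi fun i => ∑ j : Fin k, (ω ^ (i.val * j.val)) •
    ((E j).subtype.comp (LinearMap.proj j))

theorem auxA_apply {V : Type*} [AddCommGroup V] [Module ℂ V] (k : ℕ) (ω : ℂ)
    (E : Fin k → Submodule ℂ V) (v : ∀ j, E j) (i : Fin k) :
    auxA k ω E v i = ∑ j : Fin k, (ω ^ (i.val * j.val)) • (v j : V) := by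
  simp [auxA]

theorem auxA_inj {V : Type*} [AddCommGroup V] [Module ℂ V] (k : ℕ) [NeZero k] (ω : ℂ)
    (hω : IsPrimitiveRoot ω k) (E : Fin k → Submodule ℂ V) :
    Function.Injective (auxA k ω E) := by
  rw [← LinearMap.ker_eq_bot, LinearMap.ker_eq_bot']
  intro v hv
  funext b
  have h : ∑ i : Fin k, (ω⁻¹) ^ (i.val * b.val) • auxA k ω E v i = (k : ℂ) • (v b : V) := by
    simp only [auxA_apply, Finset.smul_sum, smul_smul]
    rw [Finset.sum_comm]
    simp only [← Finset.sum_smul, aux_orth k ω hω]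
    simp
  rw [hv] at h
  simp only [Pi.zero_apply, smul_zero, Finset.sum_const_zero] at h
  have := (smul_eq_zero.1 h.symm).resolve_left (Nat.cast_ne_zero.2 (NeZero.ne k))
  exact Subtype.ext this

theorem dim_triple_intersection_iteration
    (n k : ℕ) [NeZero k] (hk : 1 ≤ k)
    (Θ : Matrix (Fin n ⊕ Fin n) (Fin n ⊕ Fin n) ℝ)
    (hΘ : Θ.transpose * symplJ n * Θ = symplJ n)
    (ω : ℂ) (hω : IsPrimitiveRoot ω k) :
    Module.finrank ℂ ↥(GamSub n k Θ ⊓ Pi2kSub n k ⊓ DcycSub n k)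
      = ∑ j ∈ Finset.range k,
          Module.finrank ℂ
            ↥(LinearMap.ker (cAction Θ - (ω ^ j : ℂ) • LinearMap.id) ⊓ PiV n) := by
  rw [← Fin.sum_univ_eq_sum_range (fun j => Module.finrank ℂ
    ↥(LinearMap.ker (cAction Θ - (ω ^ j : ℂ) • LinearMap.id) ⊓ PiV n)) k]
  set E : Fin k → Submodule ℂ (CV n) := fun j =>
    LinearMap.ker (cAction Θ - (ω ^ j.val : ℂ) • LinearMap.id) ⊓ PiV n with hE
  have hkC : (k : ℂ) ≠ 0 := Nat.cast_ne_zero.2 (NeZero.ne k)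
  have h0 : ω ≠ 0 := hω.ne_zero (NeZero.ne k)
  have hEm : ∀ j x, x ∈ E j ↔ cAction Θ x = ω ^ j.val • x ∧ x ∈ PiV n := by
    intro j x
    simp [hE, sub_eq_zero]
  let f : (∀ j, E j) →ₗ[ℂ] (Fin k → CV n) × (Fin k → CV n) :=
    (auxA k ω E).prod ((LinearMap.funLeft ℂ (CV n) (fun i : Fin k => i + 1)).comp (auxA k ω E))
  have hf : Function.Injective f := fun x y h => auxA_inj k ω hω E (congrArg Prod.fst h)
  have hr : LinearMap.range f = GamSub n k Θ ⊓ Pi2kSub n k ⊓ DcycSub n k := by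
    apply le_antisymm
    · rintro _ ⟨v, rfl⟩
      have hP : ∀ i, auxA k ω E v i ∈ PiV n := by
        intro i
        rw [auxA_apply]
        exact Submodule.sum_mem _ fun j _ => Submodule.smul_mem _ _ ((hEm j _).1 (v j).2).2
      refine ⟨⟨?_, ?_⟩, ?_⟩
      · change _ ∈ LinearMap.graph _
        rw [LinearMap.mem_graph_iff]
        funext i
        change auxA k ω E v (i + 1) = cAction Θ (auxA k ω E v i)
        rw [auxA_apply, auxA_apply, map_sum]
        refine Finset.sum_congr rfl fun j _ => ?_
        rw [map_smul, ((hEm j _).1 (v j).2).1, aux_pow_shift k ω hω.pow_eq_one, smul_smul, mul_comm]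
      · exact ⟨fun i _ => hP i, fun i _ => hP (i + 1)⟩
      · change _ ∈ LinearMap.graph _
        rw [LinearMap.mem_graph_iff]
        rfl
    · rintro ⟨x, y⟩ ⟨⟨h1, h2⟩, h3⟩
      replace h1 := (LinearMap.mem_graph_iff _ _).1 h1
      replace h3 := (LinearMap.mem_graph_iff _ _).1 h3
      dsimp only at h1 h3
      have hT : ∀ i, cAction Θ (x i) = x (i + 1) := by
        intro i
        exact (congrFun (h1.symm.trans h3) i)
      have hP : ∀ i, x i ∈ PiV n := fun i => h2.1 i trivial
      have hmem : ∀ j : Fin k, (k : ℂ)⁻¹ • ∑ i : Fin k, (ω⁻¹) ^ (i.val * j.val) • x i ∈ E j := by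
        intro j
        rw [hEm]
        constructor
        · rw [map_smul, map_sum, smul_comm]
          congr 1
          rw [← Equiv.sum_comp (Equiv.addRight (1 : Fin k))
            (fun i : Fin k => (ω⁻¹) ^ (i.val * j.val) • x i), Finset.smul_sum]
          refine Finset.sum_congr rfl fun i _ => ?_
          simp only [Equiv.coe_addRight]
          rw [map_smul, hT,
            aux_pow_shift k ω⁻¹ (by rw [inv_pow, hω.pow_eq_one, inv_one]), smul_smul, ← mul_assoc,
            ← mul_pow, mul_inv_cancel₀ h0, one_pow, one_mul]
        · exact Submodule.smul_mem _ _ (Submodule.sum_mem _ fun i _ =>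
            Submodule.smul_mem _ _ (hP i))
      have hx : auxA k ω E (fun j => ⟨_, hmem j⟩) = x := by
        funext a
        rw [auxA_apply]
        simp only [Finset.smul_sum, smul_smul]
        rw [Finset.sum_comm]
        have : ∀ b : Fin k, ∑ j : Fin k, (ω ^ (a.val * j.val) * ((k : ℂ)⁻¹ *
            ω⁻¹ ^ (b.val * j.val))) • x b = ((k : ℂ)⁻¹ * if a = b then (k : ℂ) else 0) • x b := by
          intro b
          rw [← aux_orth' k ω hω a b, Finset.mul_sum, Finset.sum_smul]
          refine Finset.sum_congr rfl fun j _ => ?_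
          congr 1; ring
        simp only [← mul_assoc] at this ⊢
        rw [Finset.sum_congr rfl fun b _ => this b]
        simp [hkC]
      refine ⟨fun j => ⟨_, hmem j⟩, ?_⟩
      refine Prod.ext hx ?_
      change LinearMap.funLeft ℂ (CV n) (fun i : Fin k => i + 1) (auxA k ω E _) = y
      rw [hx, h3]
  rw [← hr, LinearMap.finrank_range_of_inj hf, Module.finrank_pi_fintype]

end
end

section
/- Let (Σ, σ) be a 2n-dimensional real symplectic vector space, Π ⊂ Σ a Lagrangian subspace, B ⊂ Σ a Lagrangian complement of Π (Σ = Π ⊕ B), and Θ1, Θ2 : Σ → Σ linear symplectomorphisms. On Σ⁴ equipped with the symplectic form (−σ) ⊕ (−σ) ⊕ σ ⊕ σ, the subspaces L0 = Π × Π × Π × Π, L1 = {(ξ1, ξ2, Θ1ξ1, Θ2ξ2) : ξ1, ξ2 ∈ Σ}, and L2 = {(ν1, α + X, α + X, ν2) : ν1, ν2, α ∈ Π, X ∈ B} are Lagrangian, and the following hold: i(L0, L1, L2) = i(Θ2^{−1}(Π), Π, Θ1(Π)) (the right-hand side computed in (Σ, σ)); dim(L1 ∩ L0) = dim(Θ1(Π)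 ∩ Π) + dim(Θ2^{−1}(Π) ∩ Π); and dim(L1 ∩ L0 ∩ L2) = dim(Θ2^{−1}(Π) ∩ Π ∩ Θ1(Π)). -/
/-- The symplectic (skew) orthogonal of a subspace `W` with respect to a bilinear form `σ`:
`W^⊥ = {u : σ u w = 0 for all w ∈ W}`. -/
def sympOrth {E : Type*} [AddCommGroup E] [Module ℝ E]
    (σ : LinearMap.BilinForm ℝ E) (W : Submodule ℝ E) : Submodule ℝ E where
  carrier := {u | ∀ w ∈ W, σ u w = 0}
  add_mem' := by
    intro a b ha hb w hw
    simp [map_add, ha w hw, hb w hw]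
  zero_mem' := by
    intro w hw
    simp
  smul_mem' := by
    intro c u hu w hw
    simp [hu w hw]

/-- A subspace is Lagrangian when it coincides with its symplectic orthogonal. -/
def IsLagrangian {E : Type*} [AddCommGroup E] [Module ℝ E]
    (σ : LinearMap.BilinForm ℝ E) (L : Submodule ℝ E) : Prop :=
  L = sympOrth σ L

/-- The negative Maslov index `i(L0, L1, L2)` of a triple of Lagrangian subspaces:
the negative inertia index of the Maslov form `m(l1) = σ(l0, l2)` (with `l1 = l0 + l2`,
`l0 ∈ L0`, `l2 ∈ L2`) defined on `L1 ∩ (L0 + L2)`, i.e. the supremum of dimensions of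
subspaces on which the Maslov form is negative definite. -/
noncomputable def maslovIndex {E : Type*} [AddCommGroup E] [Module ℝ E]
    (σ : LinearMap.BilinForm ℝ E) (L0 L1 L2 : Submodule ℝ E) : ℕ :=
  sSup {d : ℕ | ∃ W : Submodule ℝ E, W ≤ L1 ⊓ (L0 ⊔ L2) ∧
    (∀ v ∈ W, v ≠ 0 → ∀ l0 ∈ L0, ∀ l2 ∈ L2, v = l0 + l2 → σ l0 l2 < 0) ∧
    Module.finrank ℝ ↥W = d}

/-- The symplectic form `(−σ) ⊕ (−σ) ⊕ σ ⊕ σ` on `E × E × E × E`. -/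
noncomputable def sympQuad {E : Type*} [AddCommGroup E] [Module ℝ E]
    (σ : LinearMap.BilinForm ℝ E) : LinearMap.BilinForm ℝ (E × E × E × E) :=
  LinearMap.mk₂ ℝ
    (fun x y => -(σ x.1 y.1) - σ x.2.1 y.2.1 + σ x.2.2.1 y.2.2.1 + σ x.2.2.2 y.2.2.2)
    (by intro x x' y; simp [map_add]; ring)
    (by intro c x y; simp; ring)
    (by intro x y y'; simp [map_add]; ring)
    (by intro c x y; simp; ring)

theorem aux_finrank_prod {E : Type*} [AddCommGroup E] [Module ℝ E] [FiniteDimensional ℝ E]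
    (A C : Submodule ℝ E) :
    Module.finrank ℝ ↥(A.prod C) = Module.finrank ℝ A + Module.finrank ℝ C := by
  rw [← Module.finrank_prod]
  let e : ↥(A.prod C) ≃ₗ[ℝ] (A × C) :=
    { toFun := fun x => (⟨x.1.1, x.2.1⟩, ⟨x.1.2, x.2.2⟩)
      map_add' := fun _ _ => rfl
      map_smul' := fun _ _ => rfl
      invFun := fun y => ⟨(y.1.1, y.2.1), y.1.2, y.2.2⟩
      left_inv := fun _ => rfl
      right_inv := fun _ => rfl }
  exact e.finrank_eq

/-- the three subspaces `L0 = Π⁴`, `L1 = {(ξ1,ξ2,Θ1ξ1,Θ2ξ2)}`,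
`L2 = {(ν1, α+X, α+X, ν2) : ν1,ν2,α ∈ Π, X ∈ B}` are Lagrangian in
`(E⁴, (−σ)⊕(−σ)⊕σ⊕σ)`, the Maslov index `i(L0,L1,L2)` equals
`i(Θ2⁻¹(Π), Π, Θ1(Π))` in `(E,σ)`, and the stated dimension identities hold. -/
theorem maslov_index_splitting
    {E : Type*} [AddCommGroup E] [Module ℝ E] [FiniteDimensional ℝ E]
    (σ : LinearMap.BilinForm ℝ E) (n : ℕ) (hdim : Module.finrank ℝ E = 2 * n)
    (halt : ∀ v, σ v v = 0) (hnd : LinearMap.BilinForm.Nondegenerate σ)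
    (P B : Submodule ℝ E) (hP : IsLagrangian σ P) (hB : IsLagrangian σ B)
    (hcompl : IsCompl P B)
    (Θ1 Θ2 : E ≃ₗ[ℝ] E)
    (hΘ1 : ∀ u w, σ (Θ1 u) (Θ1 w) = σ u w) (hΘ2 : ∀ u w, σ (Θ2 u) (Θ2 w) = σ u w)
    (L1 : Submodule ℝ (E × E × E × E))
    (hL1 : L1 = LinearMap.range
      ((LinearMap.fst ℝ E E).prod (((LinearMap.snd ℝ E E)).prod
        ((Θ1.toLinearMap.comp (LinearMap.fst ℝ E E)).prod
          (Θ2.toLinearMap.comp (LinearMap.snd ℝ E E))))))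
    (L2 : Submodule ℝ (E × E × E × E))
    (hL2 : ∀ x : E × E × E × E,
      x ∈ L2 ↔ (x.1 ∈ P ∧ x.2.1 = x.2.2.1 ∧ x.2.2.2 ∈ P)) :
    IsLagrangian (sympQuad σ) (P.prod (P.prod (P.prod P))) ∧
    IsLagrangian (sympQuad σ) L1 ∧
    IsLagrangian (sympQuad σ) L2 ∧
    maslovIndex (sympQuad σ) (P.prod (P.prod (P.prod P))) L1 L2
      = maslovIndex σ (Submodule.comap Θ2.toLinearMap P) P
          (Submodule.map Θ1.toLinearMap P) ∧
    Module.finrank ℝ ↥(L1 ⊓ P.prod (P.prod (P.prod P)))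
      = Module.finrank ℝ ↥(Submodule.map Θ1.toLinearMap P ⊓ P)
        + Module.finrank ℝ ↥(Submodule.comap Θ2.toLinearMap P ⊓ P) ∧
    Module.finrank ℝ ↥(L1 ⊓ P.prod (P.prod (P.prod P)) ⊓ L2)
      = Module.finrank ℝ
          ↥(Submodule.comap Θ2.toLinearMap P ⊓ P ⊓ Submodule.map Θ1.toLinearMap P) := by
  have hanti : ∀ u w, σ u w = - σ w u := by
    intro u w
    have := halt (u + w)
    simp only [map_add, LinearMap.add_apply, halt] at this
    linarith
  have hPm : ∀ u, u ∈ P ↔ ∀ w ∈ P, σ u w = 0 := by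
    intro u
    constructor
    · intro h
      rw [hP] at h
      exact h
    · intro h
      rw [hP]
      exact h
  have hsep : ∀ u, (∀ w, σ u w = 0) → u = 0 := by
    intro u h
    exact hnd.1 u h
  have hq : ∀ x y, sympQuad σ x y =
      -(σ x.1 y.1) - σ x.2.1 y.2.1 + σ x.2.2.1 y.2.2.1 + σ x.2.2.2 y.2.2.2 := fun x y => rfl
  have hL1m : ∀ x : E × E × E × E, x ∈ L1 ↔ (x.2.2.1 = Θ1 x.1 ∧ x.2.2.2 = Θ2 x.2.1) := by
    rintro ⟨a, b, c, d⟩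
    rw [hL1]
    constructor
    · rintro ⟨⟨u, v⟩, h⟩
      change (u, v, Θ1 u, Θ2 v) = (a, b, c, d) at h
      simp only [Prod.mk.injEq] at h
      obtain ⟨rfl, rfl, rfl, rfl⟩ := h
      exact ⟨rfl, rfl⟩
    · rintro ⟨h1, h2⟩
      dsimp only at h1 h2
      subst h1 h2
      exact ⟨(a, b), rfl⟩
  have hL0m : ∀ x : E × E × E × E, x ∈ P.prod (P.prod (P.prod P)) ↔
      (x.1 ∈ P ∧ x.2.1 ∈ P ∧ x.2.2.1 ∈ P ∧ x.2.2.2 ∈ P) := by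
    intro x
    simp only [Submodule.mem_prod]
  have hQ1 : ∀ u, u ∈ Submodule.map Θ1.toLinearMap P ↔ Θ1.symm u ∈ P := by
    intro u
    constructor
    · rintro ⟨p, hp, rfl⟩
      simpa using hp
    · intro h
      exact ⟨_, h, by simp⟩
  have hQ2 : ∀ u, u ∈ Submodule.comap Θ2.toLinearMap P ↔ Θ2 u ∈ P := fun u => Iff.rfl
  have iso1 : ∀ u w, Θ1.symm u ∈ P → Θ1.symm w ∈ P → σ u w = 0 := by
    intro u w hu hw
    have := hΘ1 (Θ1.symm u) (Θ1.symm w)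
    simp only [LinearEquiv.apply_symm_apply] at this
    rw [this]
    exact (hPm _).1 hu _ hw
  have iso2 : ∀ u w, Θ2 u ∈ P → Θ2 w ∈ P → σ u w = 0 := by
    intro u w hu hw
    rw [← hΘ2]
    exact (hPm _).1 hu _ hw
  have key1 : ∀ x1 x2 : E, ∀ l0 ∈ P.prod (P.prod (P.prod P)), ∀ l2 ∈ L2,
      (x1, x2, Θ1 x1, Θ2 x2) = l0 + l2 → sympQuad σ l0 l2 = σ (Θ1 x1) x2 := by
    rintro x1 x2 ⟨a, b, c, d⟩ h0 ⟨e, x, y, f⟩ h2 h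
    rw [hL0m] at h0
    rw [hL2] at h2
    obtain ⟨ha, hb, hc, hd⟩ := h0
    obtain ⟨he, hxy, hf⟩ := h2
    simp only [Prod.mk_add_mk, Prod.mk.injEq] at h ha hb hc hd he hxy hf
    subst hxy
    obtain ⟨-, h2, h3, -⟩ := h
    rw [hq, h3, h2]
    simp only [map_add, LinearMap.add_apply, halt]
    rw [(hPm a).1 ha e he, (hPm d).1 hd f hf, (hPm c).1 hc b hb, hanti x b]
    ring
  have key2 : ∀ x1 x2 : E, x1 ∈ P → Θ2 x2 ∈ P → ∀ l0, Θ2 l0 ∈ P → ∀ l2, Θ1.symm l2 ∈ P →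
      x2 - Θ1 x1 = l0 + l2 → σ l0 l2 = σ (Θ1 x1) x2 := by
    intro x1 x2 h1 h2 l0 hl0 l2 hl2 h
    have e1 : σ (l0 - x2) (l2 + Θ1 x1) = 0 := by
      have : l0 - x2 = -(l2 + Θ1 x1) := by
        have : l0 = x2 - Θ1 x1 - l2 := by rw [h]; abel
        rw [this]; abel
      rw [this]; simp [halt, -map_add, -neg_add_rev]
    have e2 : σ x2 (l0 - x2) = 0 := iso2 _ _ h2 (by rw [map_sub]; exact sub_mem hl0 h2)
    have e3 : σ (l2 + Θ1 x1) (Θ1 x1) = 0 :=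
      iso1 _ _ (by rw [map_add]; exact add_mem hl2 (by simpa using h1)) (by simpa using h1)
    have e4 : l0 - x2 = -(l2 + Θ1 x1) := by
      have : l0 = x2 - Θ1 x1 - l2 := by rw [h]; abel
      rw [this]; abel
    have e5 : l0 = x2 + (l0 - x2) := by abel
    have e6 : l2 = (l2 + Θ1 x1) - Θ1 x1 := by abel
    have e7 : σ x2 (l2 + Θ1 x1) = 0 := by
      have : l2 + Θ1 x1 = -(l0 - x2) := by rw [e4, neg_neg]
      rw [this, map_neg, e2, neg_zero]
    have e8 : σ (l0 - x2) (Θ1 x1) = 0 := by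
      rw [e4, map_neg, LinearMap.neg_apply, e3, neg_zero]
    calc σ l0 l2 = σ (x2 + (l0 - x2)) ((l2 + Θ1 x1) - Θ1 x1) := by rw [← e5, ← e6]
      _ = σ x2 (l2 + Θ1 x1) - σ x2 (Θ1 x1) + (σ (l0 - x2) (l2 + Θ1 x1)
            - σ (l0 - x2) (Θ1 x1)) := by
          rw [map_add σ x2, LinearMap.add_apply, map_sub (σ x2), map_sub (σ (l0 - x2))]
      _ = σ (Θ1 x1) x2 := by rw [e7, e1, e8, hanti x2]; ring
  refine ⟨?_, ?_, ?_, ?_, ?_, ?_⟩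
  · ext ⟨a, b, c, d⟩
    rw [hL0m]
    constructor
    · rintro ⟨ha, hb, hc, hd⟩ w hw
      obtain ⟨h1, h2, h3, h4⟩ := (hL0m w).1 hw
      rw [hq, (hPm _).1 ha _ h1, (hPm _).1 hb _ h2, (hPm _).1 hc _ h3, (hPm _).1 hd _ h4]
      ring
    · intro h
      refine ⟨(hPm _).2 ?_, (hPm _).2 ?_, (hPm _).2 ?_, (hPm _).2 ?_⟩ <;> intro w hw
      · simpa [hq] using h (w, 0, 0, 0) (by simp [hL0m, hw])
      · simpa [hq] using h (0, w, 0, 0) (by simp [hL0m, hw])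
      · simpa [hq] using h (0, 0, w, 0) (by simp [hL0m, hw])
      · simpa [hq] using h (0, 0, 0, w) (by simp [hL0m, hw])
  · ext ⟨a, b, c, d⟩
    rw [hL1m]
    constructor
    · rintro ⟨h1, h2⟩ w hw
      obtain ⟨h3, h4⟩ := (hL1m w).1 hw
      dsimp only at h1 h2
      rw [hq, h3, h4]
      dsimp only
      rw [h1, h2, hΘ1, hΘ2]
      ring
    · intro h
      constructor
      · have : Θ1.symm c - a = 0 := by
          apply hsep
          intro w
          have h' := h (w, 0, Θ1 w, 0) (by simp [hL1m])
          simp only [hq, map_zero] at h'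
          have h'' := hΘ1 (Θ1.symm c) w
          rw [LinearEquiv.apply_symm_apply] at h''
          rw [map_sub, LinearMap.sub_apply]
          linarith
        rw [← sub_eq_zero.1 this]; simp
      · have : Θ2.symm d - b = 0 := by
          apply hsep
          intro w
          have h' := h (0, w, 0, Θ2 w) (by simp [hL1m])
          simp only [hq, map_zero] at h'
          have h'' := hΘ2 (Θ2.symm d) w
          rw [LinearEquiv.apply_symm_apply] at h''
          rw [map_sub, LinearMap.sub_apply]
          linarith
        rw [← sub_eq_zero.1 this]; simp
  · ext ⟨a, b, c, d⟩
    rw [hL2]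
    constructor
    · rintro ⟨h1, h2, h3⟩ w hw
      obtain ⟨h4, h5, h6⟩ := (hL2 w).1 hw
      dsimp only at h1 h2 h3
      rw [hq, h5]
      dsimp only
      rw [h2, (hPm _).1 h1 _ h4, (hPm _).1 h3 _ h6]
      ring
    · intro h
      refine ⟨(hPm _).2 ?_, ?_, (hPm _).2 ?_⟩
      · intro w hw
        simpa [hq] using h (w, 0, 0, 0) (by simp [hL2, hw])
      · have : c - b = 0 := by
          apply hsep
          intro w
          have h' := h (0, w, w, 0) (by simp [hL2])
          simp only [hq, map_zero] at h'
          rw [map_sub, LinearMap.sub_apply]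
          linarith
        exact (sub_eq_zero.1 this).symm
      · intro w hw
        simpa [hq] using h (0, 0, 0, w) (by simp [hL2, hw])
  · unfold maslovIndex
    congr 1
    ext d
    constructor
    · rintro ⟨W, hW, hneg, hd⟩
      have hWm : ∀ v ∈ W, ∃ x1 x2, v = (x1, x2, Θ1 x1, Θ2 x2) ∧ x1 ∈ P ∧ Θ2 x2 ∈ P ∧
          x2 - Θ1 x1 ∈ P ∧ (v ≠ 0 → σ (Θ1 x1) x2 < 0) := by
        intro v hv
        obtain ⟨h1, h02⟩ := hW hv
        obtain ⟨l0, hl0, l2, hl2, h⟩ := Submodule.mem_sup.1 h02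
        obtain ⟨x1, x2, x3, x4⟩ := v
        obtain ⟨h3, h4⟩ := (hL1m _).1 h1
        dsimp only at h3 h4
        subst h3 h4
        have hn := fun hne => hneg _ hv hne l0 hl0 l2 hl2 h.symm
        rw [key1 x1 x2 l0 hl0 l2 hl2 h.symm] at hn
        obtain ⟨a, b, c, d⟩ := l0
        obtain ⟨e, x, y, f⟩ := l2
        obtain ⟨ha, hb, hc, hd⟩ := (hL0m _).1 hl0
        obtain ⟨he, hxy, hf⟩ := (hL2 _).1 hl2
        simp only [Prod.mk_add_mk, Prod.mk.injEq] at h ha hb hc hd he hxy hf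
        obtain ⟨g1, g2, g3, g4⟩ := h
        refine ⟨x1, x2, rfl, ?_, ?_, ?_, hn⟩
        · rw [← g1]; exact add_mem ha he
        · rw [← g4]; exact add_mem hd hf
        · rw [← g2, ← g3, hxy, add_sub_add_right_eq_sub]; exact sub_mem hb hc
      let G : (E × E × E × E) →ₗ[ℝ] E :=
        LinearMap.fst ℝ E (E × E) ∘ₗ LinearMap.snd ℝ E (E × E × E) -
        LinearMap.fst ℝ E E ∘ₗ LinearMap.snd ℝ E (E × E) ∘ₗ LinearMap.snd ℝ E (E × E × E)
      have hG : ∀ v, G v = v.2.1 - v.2.2.1 := fun v => rfl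
      refine ⟨W.map G, ?_, ?_, ?_⟩
      · rintro _ ⟨v, hv, rfl⟩
        obtain ⟨x1, x2, rfl, h1, h2, h3, -⟩ := hWm v hv
        rw [hG]
        refine ⟨h3, Submodule.mem_sup.2 ⟨x2, h2, -Θ1 x1, ?_, by abel⟩⟩
        rw [hQ1]
        simpa using h1
      · rintro _ ⟨v, hv, rfl⟩ hne l0 hl0 l2 hl2 h
        have hv0 : v ≠ 0 := by
          rintro rfl
          exact hne (map_zero _)
        obtain ⟨x1, x2, rfl, h1, h2, h3, h4⟩ := hWm v hv
        rw [key2 x1 x2 h1 h2 l0 hl0 l2 ((hQ1 _).1 hl2) h]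
        exact h4 hv0
      · rw [← hd, ← LinearMap.range_domRestrict]
        apply LinearMap.finrank_range_of_inj
        rw [← LinearMap.ker_eq_bot, LinearMap.ker_eq_bot']
        rintro ⟨v, hv⟩ h0
        rw [LinearMap.domRestrict_apply, hG] at h0
        obtain ⟨x1, x2, rfl, h1, h2, h3, h4⟩ := hWm v hv
        by_contra hne
        have := h4 (fun h => hne (Subtype.ext h))
        have h0' : x2 = Θ1 x1 := sub_eq_zero.1 h0
        rw [h0', halt] at this
        exact lt_irrefl _ this
    · rintro ⟨W, hW, hneg, hd⟩
      set A := Submodule.comap Θ2.toLinearMap P with hA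
      set C := Submodule.map Θ1.toLinearMap P with hC
      let f : (A × C) →ₗ[ℝ] E := A.subtype.coprod C.subtype
      have hWf : W ≤ LinearMap.range f := by
        intro w hw
        obtain ⟨a, ha, c, hc, h⟩ := Submodule.mem_sup.1 (hW hw).2
        exact ⟨(⟨a, ha⟩, ⟨c, hc⟩), by simp [f, h]⟩
      obtain ⟨g, hg⟩ := f.rangeRestrict.exists_rightInverse_of_surjective
        (LinearMap.range_rangeRestrict f)
      let s : W →ₗ[ℝ] (A × C) := g ∘ₗ Submodule.inclusion hWf
      have hs : ∀ w : W, ((s w).1 : E) + ((s w).2 : E) = w := by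
        intro w
        have := congrArg Subtype.val (LinearMap.congr_fun hg (Submodule.inclusion hWf w))
        simpa [f, s] using this
      let a : W →ₗ[ℝ] E := A.subtype ∘ₗ LinearMap.fst ℝ A C ∘ₗ s
      let c : W →ₗ[ℝ] E := -(C.subtype ∘ₗ LinearMap.snd ℝ A C ∘ₗ s)
      have hac : ∀ w : W, a w - c w = w := by
        intro w
        rw [← hs w]
        simp [a, c]
      have haA : ∀ w : W, Θ2 (a w) ∈ P := fun w => (s w).1.2
      have hcC : ∀ w : W, Θ1.symm (c w) ∈ P := fun w => by
        have := neg_mem ((hQ1 _).1 (s w).2.2)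
        simpa [c] using this
      let T : W →ₗ[ℝ] (E × E × E × E) :=
        (Θ1.symm.toLinearMap ∘ₗ c).prod (a.prod (c.prod (Θ2.toLinearMap ∘ₗ a)))
      have hT : ∀ w, T w = (Θ1.symm (c w), a w, c w, Θ2 (a w)) := fun w => rfl
      refine ⟨LinearMap.range T, ?_, ?_, ?_⟩
      · rintro _ ⟨w, rfl⟩
        rw [hT]
        refine ⟨(hL1m _).2 (by simp), Submodule.mem_sup.2
          ⟨(0, a w - c w, 0, 0), ?_, (Θ1.symm (c w), c w, c w, Θ2 (a w)), ?_, by simp⟩⟩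
        · rw [hL0m, hac]
          exact ⟨zero_mem _, (hW w.2).1, zero_mem _, zero_mem _⟩
        · rw [hL2]
          exact ⟨hcC w, rfl, haA w⟩
      · rintro _ ⟨w, rfl⟩ hne l0 hl0 l2 hl2 h
        have hw0 : (w : E) ≠ 0 := by
          intro h0
          apply hne
          rw [Subtype.ext h0 (a2 := (0 : W)), map_zero]
        have k := key1 (Θ1.symm (c w)) (a w) l0 hl0 l2 hl2 (by rw [← h, hT]; simp)
        rw [k, LinearEquiv.apply_symm_apply]
        have := hneg w w.2 hw0 (a w) (haA w) (-c w) (by rw [hQ1, map_neg]; exact neg_mem (hcC w))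
          (by rw [← sub_eq_add_neg, hac])
        rw [map_neg, ← hanti] at this
        exact this
      · rw [← hd]
        apply LinearMap.finrank_range_of_inj
        intro w w' h
        rw [hT, hT] at h
        simp only [Prod.mk.injEq] at h
        apply Subtype.ext
        rw [← hac w, ← hac w', h.2.1, h.2.2.1]
  · rw [← aux_finrank_prod]
    let T : (E × E) →ₗ[ℝ] (E × E × E × E) :=
      (Θ1.symm.toLinearMap ∘ₗ LinearMap.fst ℝ E E).prod ((LinearMap.snd ℝ E E).prod
        ((LinearMap.fst ℝ E E).prod (Θ2.toLinearMap ∘ₗ LinearMap.snd ℝ E E)))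
    have hT : ∀ p, T p = (Θ1.symm p.1, p.2, p.1, Θ2 p.2) := fun p => rfl
    have hTi : Function.Injective T := by
      rintro ⟨p, q⟩ ⟨p', q'⟩ h
      simp only [hT, Prod.mk.injEq] at h
      rw [h.2.1, h.2.2.1]
    rw [(Submodule.equivMapOfInjective T hTi _).finrank_eq]
    apply congrArg (fun S : Submodule ℝ (E × E × E × E) => Module.finrank ℝ S)
    ext ⟨x1, x2, x3, x4⟩
    simp only [Submodule.mem_inf, hL1m, hL0m]
    constructor
    · rintro ⟨⟨h1, h2⟩, h3, h4, h5, h6⟩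
      subst h1 h2
      refine ⟨(Θ1 x1, x2), ⟨⟨?_, h5⟩, h6, h4⟩, by simp [hT]⟩
      exact (hQ1 _).2 (by simpa using h3)
    · rintro ⟨⟨p, q⟩, ⟨⟨h1, h2⟩, h3, h4⟩, h⟩
      simp only [hT, Prod.mk.injEq] at h
      obtain ⟨rfl, rfl, rfl, rfl⟩ := h
      exact ⟨⟨by simp, rfl⟩, (hQ1 _).1 h1, h4, h2, h3⟩
  · let T : E →ₗ[ℝ] (E × E × E × E) :=
      (Θ1.symm.toLinearMap).prod (LinearMap.id.prod (LinearMap.id.prod Θ2.toLinearMap))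
    have hT : ∀ p, T p = (Θ1.symm p, p, p, Θ2 p) := fun p => rfl
    have hTi : Function.Injective T := by
      intro p p' h
      simp only [hT, Prod.mk.injEq] at h
      exact h.2.1
    rw [(Submodule.equivMapOfInjective T hTi _).finrank_eq]
    apply congrArg (fun S : Submodule ℝ (E × E × E × E) => Module.finrank ℝ S)
    ext ⟨x1, x2, x3, x4⟩
    simp only [Submodule.mem_inf, hL1m, hL0m, hL2]
    constructor
    · rintro ⟨⟨⟨h1, h2⟩, h3, h4, h5, h6⟩, -, h7, -⟩
      subst h1 h2
      refine ⟨x2, ⟨⟨h6, h4⟩, ?_⟩, by simp [hT, h7]⟩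
      exact (hQ1 _).2 (by rw [h7]; simpa using h3)
    · rintro ⟨p, ⟨⟨h1, h2⟩, h3⟩, h⟩
      simp only [hT, Prod.mk.injEq] at h
      obtain ⟨rfl, rfl, rfl, rfl⟩ := h
      exact ⟨⟨⟨by simp, rfl⟩, (hQ1 _).1 h3, h2, h2, h1⟩, (hQ1 _).1 h3, rfl, h1⟩
end
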